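/- Let L be a Latin square of order n ≥ 2 in which the minimum deficit of a partial transversal is d, and suppose d is even. Then any minimum cover of L that contains an entry e contains a partial transversal of deficit d that contains e. -/

import Mathlib

/-!
Write `d = 2m`. A partial transversal of deficit `d` leaves exactly `d` rows, `d` columns and `d`
symbols uncovered. Halving each of these three sets and pairing rows with columns, rows with symbols
and columns with symbols yields `3m` entries that cover all the missing lines, because two lines of
different types always share an entry. So a minimum cover `C` has at most `n - d + 3m = n + m`
entries (`exists_small_cover`).

Conversely, choose from `C` one representative of every row, taking `e` for its own row, and
likewise for columns and symbols (`exists_representatives`). Each choice discards `|C| - n ≤ m`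
entries, so the entries chosen all three times form a partial transversal that contains `e` and has
at least `|C| - 3(|C| - n) ≥ n - d` entries; by minimality of `d` it has exactly `n - d`.
-/

/-- The set of entries `(i, j, L i j)` of a square array `L`. -/
def lsEntries {ι : Type} [Fintype ι] [DecidableEq ι] (L : ι → ι → ι) :
    Finset (ι × ι × ι) :=
  Finset.univ.image fun p : ι × ι => (p.1, p.2, L p.1 p.2)

/-- `L` is a Latin square: every row and every column is a bijection. -/
def IsLatin {ι : Type} (L : ι → ι → ι) : Prop :=
  (∀ i, Function.Bijective fun j => L i j) ∧ (∀ j, Function.Bijective fun i => L i j)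

/-- A cover: a set of entries representing every row, column and symbol. -/
def IsLSCover {ι : Type} [Fintype ι] [DecidableEq ι] (L : ι → ι → ι)
    (C : Finset (ι × ι × ι)) : Prop :=
  C ⊆ lsEntries L ∧ (∀ i : ι, ∃ e ∈ C, e.1 = i) ∧ (∀ j : ι, ∃ e ∈ C, e.2.1 = j) ∧
    (∀ s : ι, ∃ e ∈ C, e.2.2 = s)

/-- A minimal cover: no entry can be removed keeping it a cover. -/
def IsMinimalLSCover {ι : Type} [Fintype ι] [DecidableEq ι] (L : ι → ι → ι)
    (C : Finset (ι × ι × ι)) : Prop :=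
  IsLSCover L C ∧ ∀ e ∈ C, ¬ IsLSCover L (C.erase e)

/-- A partial transversal: a set of entries representing every line at most once. -/
def IsPT {ι : Type} [Fintype ι] [DecidableEq ι] (L : ι → ι → ι)
    (T : Finset (ι × ι × ι)) : Prop :=
  T ⊆ lsEntries L ∧
    ∀ e ∈ T, ∀ f ∈ T, e ≠ f → e.1 ≠ f.1 ∧ e.2.1 ≠ f.2.1 ∧ e.2.2 ≠ f.2.2

/-- A maximal partial transversal: not contained in any larger partial transversal. -/
def IsMaximalPT {ι : Type} [Fintype ι] [DecidableEq ι] (L : ι → ι → ι)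
    (T : Finset (ι × ι × ι)) : Prop :=
  IsPT L T ∧ ∀ e ∈ lsEntries L, e ∉ T → ¬ IsPT L (insert e T)

/-- A finite set meeting all fibres of `f` contains a system of representatives of the fibres that
passes through a prescribed element `e`. -/
lemma exists_representatives {α : Type} [DecidableEq α] {n : ℕ} (f : α → Fin n) (C : Finset α)
    (hf : ∀ i, ∃ x ∈ C, f x = i) (e : α) (he : e ∈ C) :
    ∃ R ⊆ C, e ∈ R ∧ R.card = n ∧ ∀ x ∈ R, ∀ y ∈ R, f x = f y → x = y := by
  have h : ∀ i, ∃ x ∈ C, f x = i ∧ (i = f e → x = e) := by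
    intro i
    by_cases hi : i = f e
    · exact ⟨e, he, hi.symm, fun _ => rfl⟩
    · obtain ⟨x, hx, hxi⟩ := hf i
      exact ⟨x, hx, hxi, fun h => absurd h hi⟩
  choose r hrC hrf hre using h
  refine ⟨Finset.univ.image r, ?_, ?_, ?_, ?_⟩
  · intro x hx
    obtain ⟨i, -, rfl⟩ := Finset.mem_image.1 hx
    exact hrC i
  · exact Finset.mem_image.2 ⟨f e, Finset.mem_univ _, hre _ rfl⟩
  · rw [Finset.card_image_of_injective _ (Function.LeftInverse.injective hrf)]
    simp
  · intro x hx y hy hxy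
    obtain ⟨i, -, rfl⟩ := Finset.mem_image.1 hx
    obtain ⟨j, -, rfl⟩ := Finset.mem_image.1 hy
    rw [hrf, hrf] at hxy
    rw [hxy]

/-- Pairing up two sets of size `m` of lines of different types: `p x` and `q x` are the lines of
these two types through the entry `x`, and any two lines of these types meet in an entry of `E`. -/
lemma exists_pairing {α ι : Type} [DecidableEq α] (A B : Finset ι) (m : ℕ)
    (hA : A.card = m) (hB : B.card = m) (E : Finset α) (p q : α → ι)
    (h : ∀ a b, ∃ x ∈ E, p x = a ∧ q x = b) :
    ∃ X ⊆ E, X.card ≤ m ∧ (∀ a ∈ A, ∃ x ∈ X, p x = a) ∧ ∀ b ∈ B, ∃ x ∈ X, q x = b := by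
  choose g hgE hgp hgq using h
  let φ : A ≃ B := Finset.equivOfCardEq (hA.trans hB.symm)
  refine ⟨A.attach.image fun a : A => g a (φ a), ?_, ?_, ?_, ?_⟩
  · intro x hx
    obtain ⟨a, -, rfl⟩ := Finset.mem_image.1 hx
    exact hgE _ _
  · exact Finset.card_image_le.trans (by simp [hA])
  · intro a ha
    exact ⟨_, Finset.mem_image.2 ⟨⟨a, ha⟩, Finset.mem_attach _ _, rfl⟩, hgp _ _⟩
  · intro b hb
    refine ⟨_, Finset.mem_image.2 ⟨φ.symm ⟨b, hb⟩, Finset.mem_attach _ _, rfl⟩, ?_⟩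
    rw [hgq, Equiv.apply_symm_apply]

/-- If `f` is injective on a set of `n - 2m` elements, the `2m` values it misses split into two
halves of size `m`. -/
lemma exists_halves {α : Type} {n m : ℕ} (T : Finset α) (f : α → Fin n)
    (hf : ∀ x ∈ T, ∀ y ∈ T, f x = f y → x = y) (hT : T.card + (m + m) = n) :
    ∃ A B : Finset (Fin n), A.card = m ∧ B.card = m ∧
      ∀ i, (∃ x ∈ T, f x = i) ∨ i ∈ A ∨ i ∈ B := by
  have hc : (T.image f)ᶜ.card = m + m := by
    rw [Finset.card_compl, Finset.card_image_of_injOn fun x hx y hy h => hf x hx y hy h,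
      Fintype.card_fin]
    omega
  obtain ⟨A, hA, hAc⟩ := Finset.exists_subset_card_eq (show m ≤ (T.image f)ᶜ.card by omega)
  refine ⟨A, (T.image f)ᶜ \ A, hAc, ?_, ?_⟩
  · rw [Finset.card_sdiff_of_subset hA]
    omega
  · intro i
    by_cases h : i ∈ T.image f
    · exact Or.inl (Finset.mem_image.1 h)
    · by_cases hi : i ∈ A
      · exact Or.inr (Or.inl hi)
      · exact Or.inr (Or.inr (Finset.mem_sdiff.2 ⟨Finset.mem_compl.2 h, hi⟩))

lemma mem_lsEntries {ι : Type} [Fintype ι] [DecidableEq ι] (L : ι → ι → ι) (i j : ι) :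
    (i, j, L i j) ∈ lsEntries L :=
  Finset.mem_image.2 ⟨(i, j), Finset.mem_univ _, rfl⟩

/-- A partial transversal of even deficit `2m` extends to a cover of size at most `n + m`. -/
lemma exists_small_cover {n m : ℕ} (L : Fin n → Fin n → Fin n) (hL : IsLatin L)
    (T : Finset (Fin n × Fin n × Fin n)) (hT : IsPT L T) (hc : T.card + (m + m) = n) :
    ∃ C, IsLSCover L C ∧ C.card ≤ n + m := by
  obtain ⟨R₁, R₂, hR₁, hR₂, hR⟩ := exists_halves T (fun x => x.1)
    (fun x hx y hy h => by_contra fun hne => (hT.2 x hx y hy hne).1 h) hc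
  obtain ⟨K₁, K₂, hK₁, hK₂, hK⟩ := exists_halves T (fun x => x.2.1)
    (fun x hx y hy h => by_contra fun hne => (hT.2 x hx y hy hne).2.1 h) hc
  obtain ⟨S₁, S₂, hS₁, hS₂, hS⟩ := exists_halves T (fun x => x.2.2)
    (fun x hx y hy h => by_contra fun hne => (hT.2 x hx y hy hne).2.2 h) hc
  obtain ⟨X, hXE, hXc, hX₁, hX₂⟩ := exists_pairing R₁ K₁ m hR₁ hK₁ (lsEntries L)
    (fun x => x.1) (fun x => x.2.1) (fun i j => ⟨_, mem_lsEntries L i j, rfl, rfl⟩)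
  obtain ⟨Y, hYE, hYc, hY₁, hY₂⟩ := exists_pairing R₂ S₁ m hR₂ hS₁ (lsEntries L)
    (fun x => x.1) (fun x => x.2.2) (fun i s => by
      obtain ⟨j, hj⟩ := (hL.1 i).2 s
      exact ⟨_, mem_lsEntries L i j, rfl, hj⟩)
  obtain ⟨Z, hZE, hZc, hZ₁, hZ₂⟩ := exists_pairing K₂ S₂ m hK₂ hS₂ (lsEntries L)
    (fun x => x.2.1) (fun x => x.2.2) (fun j s => by
      obtain ⟨i, hi⟩ := (hL.2 j).2 s
      exact ⟨_, mem_lsEntries L i j, rfl, hi⟩)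
  refine ⟨T ∪ (X ∪ (Y ∪ Z)), ⟨?_, ?_, ?_, ?_⟩, ?_⟩
  · exact Finset.union_subset hT.1 (Finset.union_subset hXE (Finset.union_subset hYE hZE))
  · intro i
    rcases hR i with ⟨x, hx, h⟩ | h | h
    · exact ⟨x, by simp [hx], h⟩
    · obtain ⟨x, hx, h⟩ := hX₁ i h
      exact ⟨x, by simp [hx], h⟩
    · obtain ⟨x, hx, h⟩ := hY₁ i h
      exact ⟨x, by simp [hx], h⟩
  · intro j
    rcases hK j with ⟨x, hx, h⟩ | h | h
    · exact ⟨x, by simp [hx], h⟩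
    · obtain ⟨x, hx, h⟩ := hX₂ j h
      exact ⟨x, by simp [hx], h⟩
    · obtain ⟨x, hx, h⟩ := hZ₁ j h
      exact ⟨x, by simp [hx], h⟩
  · intro s
    rcases hS s with ⟨x, hx, h⟩ | h | h
    · exact ⟨x, by simp [hx], h⟩
    · obtain ⟨x, hx, h⟩ := hY₂ s h
      exact ⟨x, by simp [hx], h⟩
    · obtain ⟨x, hx, h⟩ := hZ₂ s h
      exact ⟨x, by simp [hx], h⟩
  · have h₁ := Finset.card_union_le T (X ∪ (Y ∪ Z))
    have h₂ := Finset.card_union_le X (Y ∪ Z)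
    have h₃ := Finset.card_union_le Y Z
    omega

/-- If the minimum deficit of a partial transversal of a Latin square of order `n ≥ 2`
is `d` and `d` is even, then any minimum cover containing an entry `e` contains a
partial transversal of deficit `d` containing `e`. -/
theorem stmt6 {n : ℕ} (hn : 2 ≤ n) (L : Fin n → Fin n → Fin n) (hL : IsLatin L)
    (d : ℕ) (hdeven : Even d)
    (hd : IsLeast {d' : ℕ | ∃ T : Finset (Fin n × Fin n × Fin n),
      IsPT L T ∧ T.card + d' = n} d)
    (C : Finset (Fin n × Fin n × Fin n)) (hC : IsLSCover L C)
    (hmin : ∀ C' : Finset (Fin n × Fin n × Fin n), IsLSCover L C' → C.card ≤ C'.card)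
    (e : Fin n × Fin n × Fin n) (he : e ∈ C) :
    ∃ T : Finset (Fin n × Fin n × Fin n),
      T ⊆ C ∧ e ∈ T ∧ IsPT L T ∧ T.card + d = n := by
  obtain ⟨m, rfl⟩ := hdeven
  obtain ⟨⟨T₀, hT₀, hT₀c⟩, hleast⟩ := hd
  obtain ⟨C', hC', hC'c⟩ := exists_small_cover L hL T₀ hT₀ hT₀c
  have hCc : C.card ≤ n + m := (hmin C' hC').trans hC'c
  obtain ⟨hCE, hrow, hcol, hsym⟩ := hC
  obtain ⟨R, hRC, heR, hRc, hR⟩ := exists_representatives (fun x => x.1) C hrow e he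
  obtain ⟨K, hKC, heK, hKc, hK⟩ := exists_representatives (fun x => x.2.1) C hcol e he
  obtain ⟨S, hSC, heS, hSc, hS⟩ := exists_representatives (fun x => x.2.2) C hsym e he
  have hT : IsPT L (R ∩ (K ∩ S)) := by
    refine ⟨fun x hx => hCE (hRC (Finset.mem_inter.1 hx).1), ?_⟩
    intro x hx y hy hne
    simp only [Finset.mem_inter] at hx hy
    exact ⟨fun h => hne (hR x hx.1 y hy.1 h), fun h => hne (hK x hx.2.1 y hy.2.1 h),
      fun h => hne (hS x hx.2.2 y hy.2.2 h)⟩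
  refine ⟨R ∩ (K ∩ S), fun x hx => hRC (Finset.mem_inter.1 hx).1, by simp [heR, heK, heS], hT, ?_⟩
  have h₁ := Finset.card_union_add_card_inter K S
  have h₂ := Finset.card_union_add_card_inter R (K ∩ S)
  have h₃ : (K ∪ S).card ≤ C.card := Finset.card_le_card (Finset.union_subset hKC hSC)
  have h₄ : (R ∪ K ∩ S).card ≤ C.card := Finset.card_le_card
    (Finset.union_subset hRC fun x hx => hKC (Finset.mem_inter.1 hx).1)
  have h₅ : (R ∩ (K ∩ S)).card ≤ n :=
    (Finset.card_le_card Finset.inter_subset_left).trans hRc.le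
  have h₆ : m + m ≤ n - (R ∩ (K ∩ S)).card := hleast ⟨_, hT, by omega⟩
  omega
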